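/- Let σ : ℝ → ℝ be expressive, let (f_n) be a sequence of Boolean functions f_n : {±1}^n → {±1}, and let ε > 0, N = n^{1+ε}. If INAL(f_n, σ) = O(n^{-c}) for some c, then CP(orb(f̄_n), U^N) = O(n^{-(ε/(1+ε))·(c-1)}), where f̄_n is the N-extension of f_n and orb(f̄_n) is the uniform distribution on its orbit under coordinate permutations. -/

import Mathlib

open MeasureTheory ProbabilityTheory Filter Finset Asymptotics
open scoped NNReal ENNReal

noncomputable section

/-- The ±1 value encoded by a Boolean bit. -/
def bsign (b : Bool) : ℝ := if b then 1 else -1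

/-- Expectation over a uniformly random point of the Boolean cube `{±1}^n`. -/
def bExp (n : ℕ) (g : (Fin n → Bool) → ℝ) : ℝ :=
  (∑ x : Fin n → Bool, g x) / 2 ^ n

/-- A function on the Boolean cube is Boolean(-valued) if it takes values in `{±1}`. -/
def IsBooleanFn {n : ℕ} (f : (Fin n → Bool) → ℝ) : Prop := ∀ x, f x = 1 ∨ f x = -1

/-- Initialization distribution: the weights `w : ℝⁿ` and the bias `b` are
iid `N(0, 1/n)` Gaussians. -/
def initMeasure (n : ℕ) : Measure ((Fin n → ℝ) × ℝ) :=
  (Measure.pi fun _ : Fin n => gaussianReal 0 (n : ℝ≥0)⁻¹).prod (gaussianReal 0 (n : ℝ≥0)⁻¹)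

/-- Initial alignment `INAL(f, σ) = E_{w,b} [ (E_x [f(x) σ(wᵀx + b)])² ]`. -/
def INAL (n : ℕ) (f : (Fin n → Bool) → ℝ) (σ : ℝ → ℝ) : ℝ :=
  ∫ θ : (Fin n → ℝ) × ℝ,
    (bExp n fun x => f x * σ (∑ i, θ.1 i * bsign (x i) + θ.2)) ^ 2 ∂ initMeasure n

/-- The `v`-Gaussian smoothing `Σ_v(t) = E_{Y ∼ N(0,v)} [σ(Y + t)]`. -/
def gsmooth (σ : ℝ → ℝ) (v : ℝ) (t : ℝ) : ℝ :=
  ∫ y, σ (y + t) ∂ gaussianReal 0 v.toNNReal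

/-- `σ` is polynomially bounded: `|σ(x)| ≤ C |x|^c + C` for some `C, c > 0`. -/
def PolyBounded (σ : ℝ → ℝ) : Prop :=
  ∃ C : ℝ, 0 < C ∧ ∃ c : ℕ, 0 < c ∧ ∀ x : ℝ, |σ x| ≤ C * |x| ^ c + C

/-- `σ` is expressive: measurable, polynomially bounded, and its Gaussian smoothing has no
two consecutive vanishing derivatives at `0`. -/
def Expressive (σ : ℝ → ℝ) : Prop :=
  Measurable σ ∧ PolyBounded σ ∧
    ∀ m : ℕ, iteratedDeriv m (gsmooth σ 1) 0 ≠ 0 ∨ iteratedDeriv (m + 1) (gsmooth σ 1) 0 ≠ 0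

/-- A nonnegative sequence is negligible if it decays faster than any inverse polynomial. -/
def Negligible (g : ℕ → ℝ) : Prop :=
  ∀ c : ℕ, Tendsto (fun n : ℕ => (n : ℝ) ^ c * g n) atTop (nhds 0)

/-- Fourier character `M_S(x) = ∏_{i ∈ S} x_i`. -/
def chi {n : ℕ} (S : Finset (Fin n)) (x : Fin n → Bool) : ℝ := ∏ i ∈ S, bsign (x i)

/-- Fourier coefficient `f̂(S) = E_x [f(x) M_S(x)]`. -/
def fourierCoef (n : ℕ) (f : (Fin n → Bool) → ℝ) (S : Finset (Fin n)) : ℝ :=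
  bExp n fun x => f x * chi S x

/-- Fourier weight up to degree `k`: `W^{≤k}(f)`. -/
def weightLE (n k : ℕ) (f : (Fin n → Bool) → ℝ) : ℝ :=
  ∑ S ∈ Finset.univ.filter (fun S : Finset (Fin n) => S.card ≤ k), fourierCoef n f S ^ 2

/-- Fourier weight strictly below degree `k`: `W^{<k}(f)`. -/
def weightLT (n k : ℕ) (f : (Fin n → Bool) → ℝ) : ℝ :=
  ∑ S ∈ Finset.univ.filter (fun S : Finset (Fin n) => S.card < k), fourierCoef n f S ^ 2

/-- The monomial `M_k(x) = ∏_{i=1}^k x_i`, viewed as a function on `{±1}^n`. -/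
def monomial (n k : ℕ) : (Fin n → Bool) → ℝ :=
  fun x => ∏ i ∈ Finset.univ.filter (fun i : Fin n => (i : ℕ) < k), bsign (x i)

/-- The `N`-extension of `f : {±1}^n → ℝ` (for `n ≤ N`): ignore the last `N - n` coordinates. -/
def extendFn (n N : ℕ) (f : (Fin n → Bool) → ℝ) : (Fin N → Bool) → ℝ :=
  fun x => f fun i => if h : (i : ℕ) < N then x ⟨i, h⟩ else false

/-- Cross-predictability of (the uniform distribution on) the orbit of `f` under coordinate
permutations, with uniform inputs: `CP(orb(f), U^N)`. -/
def orbitCP (N : ℕ) (f : (Fin N → Bool) → ℝ) : ℝ :=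
  (∑ π : Equiv.Perm (Fin N), ∑ π' : Equiv.Perm (Fin N),
      (bExp N fun x => f (fun i => x (π i)) * f (fun i => x (π' i))) ^ 2) /
    (Fintype.card (Equiv.Perm (Fin N))) ^ 2

/-- `N = n^{1+ε}` (rounded up). -/
def Ndim (ε : ℝ) (n : ℕ) : ℕ := ⌈(n : ℝ) ^ (1 + ε)⌉₊

/-!
Write `W_k` for the Fourier weight of `f` at level `k` and `Σ` for the Gaussian smoothing of `σ`.

For a fixed bias `b` and `w ∼ N(0, 1/n)ⁿ`, the correlation `E_x[f(x) σ(wᵀx + b)]`, as a function of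
`w`, has inner product `f̂(S) n^{-#S} Σ^{(#S)}(b)` with the monomial `∏_{i ∈ S} wᵢ`: flipping the
signs of `w` turns `wᵀx` into `∑ᵢ wᵢ`, and Gaussian integration by parts trades each factor `wᵢ`
for `1/n` times a derivative in `b`. Bessel's inequality for these orthogonal monomials gives
`W_k Σ^{(k)}(b)² ≤ n^k E_w[…²]`. As `Σ^{(k)}` vanishes at `0` to order at most one and `b` has size
about `n^{-1/2}`, averaging over `b` yields `W_k = O(n^{k+1} INAL)`.

Conversely, two random permutations embed `f` into `N` coordinates so that a set `S` of coordinates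
of the first copy lies inside the second copy with probability at most `(n/N)^{#S}`, and only these
`S` contribute to the correlation of the two copies. Hence the cross-predictability is at most
`∑_k W_k (n/N)^k`, of which the levels below `(c-1)/(1+ε)` are controlled by `INAL` and the others
by the factor `(n/N)^k ≤ n^{-εk}`.
-/

/-! ### Fourier analysis on the cube -/

section Fourier

variable {n N : ℕ}

lemma bsign_mul_self (b : Bool) : bsign b * bsign b = 1 := by cases b <;> simp [bsign]

lemma bExp_sum {ι : Type*} (s : Finset ι) (g : ι → (Fin n → Bool) → ℝ) :
    bExp n (fun x => ∑ i ∈ s, g i x) = ∑ i ∈ s, bExp n (g i) := by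
  simp only [bExp, Finset.sum_div]
  exact Finset.sum_comm

lemma bExp_const_mul (a : ℝ) (g : (Fin n → Bool) → ℝ) :
    bExp n (fun x => a * g x) = a * bExp n g := by
  simp only [bExp, ← Finset.mul_sum, mul_div_assoc]

lemma chi_eq_prod_univ (S : Finset (Fin n)) (x : Fin n → Bool) :
    chi S x = ∏ i, if i ∈ S then bsign (x i) else 1 := by
  simp [chi, Finset.prod_ite_mem]

lemma chi_comp_embedding (a : Fin n ↪ Fin N) (S : Finset (Fin n)) (x : Fin N → Bool) :
    chi S (fun i => x (a i)) = chi (S.map a) x := by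
  simp [chi]

lemma bExp_prod (g : Fin n → Bool → ℝ) :
    bExp n (fun x => ∏ i, g i (x i)) = ∏ i, (g i true + g i false) / 2 := by
  simp only [bExp, Finset.prod_div_distrib, Finset.prod_const, Finset.card_univ, Fintype.card_fin,
    ← Fintype.sum_bool, Finset.prod_univ_sum, Fintype.piFinset_univ]

lemma bExp_chi_mul_chi (S T : Finset (Fin n)) :
    bExp n (fun x => chi S x * chi T x) = if S = T then 1 else 0 := by
  simp only [chi_eq_prod_univ, ← Finset.prod_mul_distrib]
  rw [bExp_prod fun i b => (if i ∈ S then bsign b else 1) * (if i ∈ T then bsign b else 1)]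
  split_ifs with hST
  · subst hST
    refine Finset.prod_eq_one fun i _ => ?_
    by_cases hi : i ∈ S <;> simp [hi, bsign]
  · obtain ⟨i, hi⟩ : ∃ i, ¬(i ∈ S ↔ i ∈ T) := by
      by_contra! h
      exact hST (Finset.ext h)
    refine Finset.prod_eq_zero (Finset.mem_univ i) ?_
    by_cases hS : i ∈ S <;> by_cases hT : i ∈ T <;> simp [hS, hT, bsign] at hi ⊢

lemma sum_chi_mul_chi (x y : Fin n → Bool) :
    ∑ S, chi S x * chi S y = if x = y then 2 ^ n else 0 := by
  have h : ∑ S, chi S x * chi S y = ∏ i, (1 + bsign (x i) * bsign (y i)) := by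
    simp [Finset.prod_one_add, chi, Finset.prod_mul_distrib]
  rw [h]
  split_ifs with hxy
  · norm_num [hxy, bsign_mul_self]
  · obtain ⟨i, hi⟩ := Function.ne_iff.mp hxy
    refine Finset.prod_eq_zero (Finset.mem_univ i) ?_
    cases hx : x i <;> cases hy : y i <;> simp [hx, hy, bsign] at hi ⊢

lemma sum_fourierCoef_mul_chi (f : (Fin n → Bool) → ℝ) (x : Fin n → Bool) :
    ∑ S, fourierCoef n f S * chi S x = f x := by
  calc ∑ S, fourierCoef n f S * chi S x
      = bExp n fun y => f y * ∑ S, chi S y * chi S x := by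
        simp only [Finset.mul_sum, bExp_sum, fourierCoef, mul_comm _ (chi _ x), ← bExp_const_mul]
        simp only [mul_left_comm]
    _ = f x := by simp [bExp, sum_chi_mul_chi]

lemma bExp_comp_embedding_mul (f : (Fin n → Bool) → ℝ) (a : Fin n ↪ Fin N)
    (h : (Fin N → Bool) → ℝ) :
    bExp N (fun x => f (fun i => x (a i)) * h x)
      = ∑ S, fourierCoef n f S * fourierCoef N h (S.map a) := by
  simp only [fourierCoef, ← bExp_const_mul (bExp n _), ← bExp_sum, mul_left_comm _ (h _),
    ← Finset.mul_sum]
  simp only [← chi_comp_embedding, ← fourierCoef.eq_def, sum_fourierCoef_mul_chi, mul_comm (h _)]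

lemma sum_fourierCoef_sq (f : (Fin n → Bool) → ℝ) :
    ∑ S, fourierCoef n f S ^ 2 = bExp n fun x => f x ^ 2 := by
  simpa [pow_two] using (bExp_comp_embedding_mul f (Function.Embedding.refl _) f).symm

lemma fourierCoef_comp_embedding (f : (Fin n → Bool) → ℝ) (a : Fin n ↪ Fin N)
    (T : Finset (Fin N)) :
    fourierCoef N (fun x => f fun i => x (a i)) T
      = ∑ S, fourierCoef n f S * if S.map a = T then 1 else 0 := by
  rw [fourierCoef, bExp_comp_embedding_mul]
  simp only [fourierCoef, mul_comm (chi T _), bExp_chi_mul_chi]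

lemma fourierCoef_comp_embedding_map (f : (Fin n → Bool) → ℝ) (a : Fin n ↪ Fin N)
    (S : Finset (Fin n)) :
    fourierCoef N (fun x => f fun i => x (a i)) (S.map a) = fourierCoef n f S := by
  simp [fourierCoef_comp_embedding]

lemma fourierCoef_comp_embedding_of_not_subset (f : (Fin n → Bool) → ℝ) (a : Fin n ↪ Fin N)
    {T : Finset (Fin N)} (hT : ¬T ⊆ univ.map a) :
    fourierCoef N (fun x => f fun i => x (a i)) T = 0 := by
  rw [fourierCoef_comp_embedding]
  refine Finset.sum_eq_zero fun S _ => ?_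
  rw [if_neg, mul_zero]
  rintro rfl
  exact hT (Finset.map_subset_map.mpr (Finset.subset_univ S))

lemma bExp_comp_embedding_sq (f : (Fin n → Bool) → ℝ) (a : Fin n ↪ Fin N) :
    bExp N (fun x => f (fun i => x (a i)) ^ 2) = bExp n fun x => f x ^ 2 := by
  calc bExp N (fun x => f (fun i => x (a i)) ^ 2)
      = ∑ S, fourierCoef n f S * fourierCoef N (fun x => f fun i => x (a i)) (S.map a) := by
        rw [← bExp_comp_embedding_mul]
        simp only [pow_two]
    _ = bExp n fun x => f x ^ 2 := by
        simp only [fourierCoef_comp_embedding_map, ← pow_two, sum_fourierCoef_sq]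

lemma sq_bExp_comp_mul_comp_le (f : (Fin n → Bool) → ℝ) (a a' : Fin n ↪ Fin N) :
    (bExp N fun x => f (fun i => x (a i)) * f (fun i => x (a' i))) ^ 2
      ≤ (bExp n fun x => f x ^ 2) * ∑ S with S.map a ⊆ univ.map a', fourierCoef n f S ^ 2 := by
  set h : (Fin N → Bool) → ℝ := fun x => f fun i => x (a' i)
  have restrict : bExp N (fun x => f (fun i => x (a i)) * h x)
      = ∑ S with S.map a ⊆ univ.map a', fourierCoef n f S * fourierCoef N h (S.map a) := by
    rw [bExp_comp_embedding_mul, Finset.sum_filter_of_ne]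
    intro S _ hne
    contrapose! hne
    rw [fourierCoef_comp_embedding_of_not_subset f a' hne, mul_zero]
  have coef_sum_le : ∑ S : Finset (Fin n) with S.map a ⊆ univ.map a', fourierCoef N h (S.map a) ^ 2
      ≤ bExp n fun x => f x ^ 2 := by
    calc ∑ S : Finset (Fin n) with S.map a ⊆ univ.map a', fourierCoef N h (S.map a) ^ 2
        ≤ ∑ S : Finset (Fin n), fourierCoef N h (S.map a) ^ 2 :=
          Finset.sum_le_univ_sum_of_nonneg fun S => sq_nonneg _
      _ = ∑ T ∈ univ.map (Finset.mapEmbedding a).toEmbedding, fourierCoef N h T ^ 2 := by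
          rw [Finset.sum_map]; rfl
      _ ≤ ∑ T, fourierCoef N h T ^ 2 := Finset.sum_le_univ_sum_of_nonneg fun T => sq_nonneg _
      _ = bExp n fun x => f x ^ 2 := by rw [sum_fourierCoef_sq, bExp_comp_embedding_sq]
  rw [restrict, mul_comm (bExp n _)]
  exact (Finset.sum_mul_sq_le_sq_mul_sq _ _ _).trans
    (mul_le_mul_of_nonneg_left coef_sum_le (Finset.sum_nonneg fun S _ => sq_nonneg _))

end Fourier

/-! ### Counting permutations -/

section Permutations

variable {α : Type*} [Fintype α] [DecidableEq α]

/-- The permutations that send `T` into `V`. -/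
def permsMapsTo (T V : Finset α) : Finset (Equiv.Perm α) := {p | ∀ i ∈ T, p i ∈ V}

lemma mem_permsMapsTo {T V : Finset α} {p : Equiv.Perm α} :
    p ∈ permsMapsTo T V ↔ ∀ i ∈ T, p i ∈ V := by
  simp [permsMapsTo]

lemma card_permsMapsTo_insert_le {T : Finset α} (V : Finset α) {t : α} (ht : t ∉ T) (u : α) :
    #(permsMapsTo (insert t T) V) ≤ #(permsMapsTo (insert u T) V) := by
  by_cases hu : u ∈ T
  · refine Finset.card_le_card fun p hp => ?_
    rw [Finset.insert_eq_of_mem hu]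
    exact mem_permsMapsTo.mpr fun i hi => mem_permsMapsTo.mp hp i (Finset.mem_insert_of_mem hi)
  · refine Finset.card_le_card_of_injOn (· * Equiv.swap t u) (fun p hp => ?_)
      (mul_left_injective _).injOn
    obtain ⟨hpt, hpT⟩ := (Finset.forall_mem_insert _ _ _).mp (mem_permsMapsTo.mp hp)
    refine mem_permsMapsTo.mpr ((Finset.forall_mem_insert _ _ _).mpr
      ⟨by simpa using hpt, fun i hi => ?_⟩)
    rw [Equiv.Perm.mul_apply, Equiv.swap_apply_of_ne_of_ne (ne_of_mem_of_not_mem hi ht)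
      (ne_of_mem_of_not_mem hi hu)]
    exact hpT i hi

lemma sum_card_permsMapsTo_insert (T V : Finset α) :
    ∑ u, #(permsMapsTo (insert u T) V) = #(permsMapsTo T V) * #V := by
  calc ∑ u, #(permsMapsTo (insert u T) V)
      = ∑ u, #{p ∈ permsMapsTo T V | p u ∈ V} := by
        refine Finset.sum_congr rfl fun u _ => congrArg Finset.card (Finset.ext fun p => ?_)
        simp [mem_permsMapsTo, and_comm]
    _ = ∑ p ∈ permsMapsTo T V, #{u | p u ∈ V} :=
        Finset.sum_card_bipartiteAbove_eq_sum_card_bipartiteBelow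
          fun (u : α) (p : Equiv.Perm α) => p u ∈ V
    _ = #(permsMapsTo T V) * #V :=
        Finset.sum_const_nat fun p _ => Finset.card_equiv p fun u => by simp

-- Averaging over `u`, a further point lands in `V` with probability at most `#V / card α`.
lemma card_permsMapsTo_insert_le_mul {T : Finset α} (V : Finset α) {t : α} (ht : t ∉ T) :
    (#(permsMapsTo (insert t T) V) : ℝ) ≤ #(permsMapsTo T V) * ((#V : ℝ) / Fintype.card α) := by
  have average : Fintype.card α * #(permsMapsTo (insert t T) V) ≤ #(permsMapsTo T V) * #V := by
    rw [← sum_card_permsMapsTo_insert, ← Finset.card_univ, ← smul_eq_mul]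
    exact Finset.card_nsmul_le_sum _ _ _ fun u _ => card_permsMapsTo_insert_le V ht u
  have card_pos : (0 : ℝ) < Fintype.card α := mod_cast Fintype.card_pos_iff.mpr ⟨t⟩
  rw [← mul_div_assoc, le_div_iff₀' card_pos]
  exact_mod_cast average

lemma card_permsMapsTo_le (T V : Finset α) :
    (#(permsMapsTo T V) : ℝ)
      ≤ Fintype.card (Equiv.Perm α) * ((#V : ℝ) / Fintype.card α) ^ #T := by
  induction T using Finset.induction_on with
  | empty => simp [permsMapsTo, Finset.card_univ]
  | insert t T ht ih =>
    rw [Finset.card_insert_of_notMem ht, pow_succ, ← mul_assoc]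
    exact (card_permsMapsTo_insert_le_mul V ht).trans (by gcongr)

end Permutations

/-! ### Cross-predictability of orbits -/

section OrbitCP

variable {n N : ℕ}

lemma extendFn_eq_comp_castLEEmb (hnN : n ≤ N) (f : (Fin n → Bool) → ℝ) (x : Fin N → Bool) :
    extendFn n N f x = f fun i => x (Fin.castLEEmb hnN i) := by
  refine congrArg f (funext fun i => ?_)
  rw [dif_pos (i.2.trans_le hnN)]
  rfl

lemma sum_perm_sum_filter_subset (a : Fin n ↪ Fin N) (w : Finset (Fin n) → ℝ)
    (V : Finset (Fin N)) :
    ∑ p : Equiv.Perm (Fin N), ∑ S : Finset (Fin n) with S.map (a.trans p.toEmbedding) ⊆ V, w S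
      = ∑ S, #(permsMapsTo (S.map a) V) * w S := by
  simp only [Finset.sum_filter]
  rw [Finset.sum_comm]
  refine Finset.sum_congr rfl fun S _ => ?_
  rw [← Finset.sum_filter, Finset.sum_const, nsmul_eq_mul]
  congr 3
  ext p
  simp [mem_permsMapsTo, Finset.subset_iff]

lemma bExp_sq_nonneg (f : (Fin n → Bool) → ℝ) : 0 ≤ bExp n fun x => f x ^ 2 :=
  div_nonneg (Finset.sum_nonneg fun x _ => sq_nonneg (f x)) (by positivity)

lemma sum_perm_sq_bExp_comp_mul_comp_le (f : (Fin n → Bool) → ℝ) (a a' : Fin n ↪ Fin N) :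
    ∑ p : Equiv.Perm (Fin N),
        (bExp N fun x => f (fun i => x (p (a i))) * f (fun i => x (a' i))) ^ 2
      ≤ Fintype.card (Equiv.Perm (Fin N)) *
        ((bExp n fun x => f x ^ 2) * ∑ S, fourierCoef n f S ^ 2 * ((n : ℝ) / N) ^ #S) := by
  have hM := bExp_sq_nonneg f
  set M := bExp n fun x => f x ^ 2
  calc ∑ p : Equiv.Perm (Fin N),
        (bExp N fun x => f (fun i => x (p (a i))) * f (fun i => x (a' i))) ^ 2
      ≤ ∑ p : Equiv.Perm (Fin N), M * ∑ S : Finset (Fin n) with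
          S.map (a.trans p.toEmbedding) ⊆ univ.map a', fourierCoef n f S ^ 2 :=
        Finset.sum_le_sum fun p _ => sq_bExp_comp_mul_comp_le f (a.trans p.toEmbedding) a'
    _ = M * ∑ S, #(permsMapsTo (S.map a) (univ.map a')) * fourierCoef n f S ^ 2 := by
        rw [← Finset.mul_sum, sum_perm_sum_filter_subset]
    _ ≤ M * ∑ S : Finset (Fin n),
          Fintype.card (Equiv.Perm (Fin N)) * ((n : ℝ) / N) ^ #S * fourierCoef n f S ^ 2 := by
        gcongr with S
        simpa using card_permsMapsTo_le (S.map a) (univ.map a')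
    _ = Fintype.card (Equiv.Perm (Fin N)) *
          (M * ∑ S, fourierCoef n f S ^ 2 * ((n : ℝ) / N) ^ #S) := by
        simp only [Finset.mul_sum]
        exact Finset.sum_congr rfl fun S _ => by ring

lemma orbitCP_extendFn_le (hnN : n ≤ N) (f : (Fin n → Bool) → ℝ) :
    orbitCP N (extendFn n N f)
      ≤ (bExp n fun x => f x ^ 2) * ∑ S, fourierCoef n f S ^ 2 * ((n : ℝ) / N) ^ #S := by
  simp only [orbitCP, extendFn_eq_comp_castLEEmb hnN]
  rw [div_le_iff₀ (by positivity), Finset.sum_comm]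
  refine (Finset.sum_le_card_nsmul _ _ _ fun p' _ => sum_perm_sq_bExp_comp_mul_comp_le f
    (Fin.castLEEmb hnN) ((Fin.castLEEmb hnN).trans p'.toEmbedding)).trans_eq ?_
  rw [Finset.card_univ, nsmul_eq_mul]
  ring

lemma orbitCP_extendFn_le_weightLT (hnN : n ≤ N) (f : (Fin n → Bool) → ℝ) (K : ℕ) :
    orbitCP N (extendFn n N f) ≤ (bExp n fun x => f x ^ 2) *
      (weightLT n K f + (bExp n fun x => f x ^ 2) * ((n : ℝ) / N) ^ K) := by
  refine (orbitCP_extendFn_le hnN f).trans (mul_le_mul_of_nonneg_left ?_ (bExp_sq_nonneg f))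
  have ratio_le_one : (n : ℝ) / N ≤ 1 := div_le_one_of_le₀ (mod_cast hnN) N.cast_nonneg
  rw [weightLT, Finset.sum_filter, ← sum_fourierCoef_sq, Finset.sum_mul, ← Finset.sum_add_distrib]
  refine Finset.sum_le_sum fun S _ => ?_
  split_ifs with hS
  · have : fourierCoef n f S ^ 2 * ((n : ℝ) / N) ^ #S ≤ fourierCoef n f S ^ 2 :=
      mul_le_of_le_one_right (sq_nonneg _) (pow_le_one₀ (by positivity) ratio_le_one)
    have : 0 ≤ fourierCoef n f S ^ 2 * ((n : ℝ) / N) ^ K := by positivity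
    linarith
  · rw [zero_add]
    gcongr ?_ * ?_
    exact pow_le_pow_of_le_one (by positivity) ratio_le_one (not_lt.mp hS)

end OrbitCP

/-! ### Functions of exponential growth -/

section ExpGrowth

variable {E F : Type*} [NormedAddCommGroup E] [NormedAddCommGroup F]

/-- At most exponential growth: the class of integrands for which every integral against a Gaussian
measure below converges. It contains all polynomially bounded functions. -/
def ExpGrowth (g : E → ℝ) : Prop := ∃ A a : ℝ≥0, ∀ x, |g x| ≤ A * Real.exp (a * ‖x‖)

namespace ExpGrowth

lemma const (c : ℝ) : ExpGrowth fun _ : E => c := ⟨‖c‖₊, 0, fun x => by simp⟩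

lemma mul {g h : E → ℝ} (hg : ExpGrowth g) (hh : ExpGrowth h) :
    ExpGrowth fun x => g x * h x := by
  obtain ⟨A, a, hA⟩ := hg
  obtain ⟨B, b, hB⟩ := hh
  refine ⟨A * B, a + b, fun x => ?_⟩
  calc |g x * h x| ≤ A * Real.exp (a * ‖x‖) * (B * Real.exp (b * ‖x‖)) := by
        rw [abs_mul]
        gcongr
        exacts [hA x, hB x]
    _ = ↑(A * B) * Real.exp (↑(a + b) * ‖x‖) := by
        push_cast
        rw [add_mul, Real.exp_add]
        ring

lemma add {g h : E → ℝ} (hg : ExpGrowth g) (hh : ExpGrowth h) :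
    ExpGrowth fun x => g x + h x := by
  obtain ⟨A, a, hA⟩ := hg
  obtain ⟨B, b, hB⟩ := hh
  refine ⟨A + B, max a b, fun x => ?_⟩
  calc |g x + h x| ≤ A * Real.exp (a * ‖x‖) + B * Real.exp (b * ‖x‖) :=
        (abs_add_le _ _).trans (add_le_add (hA x) (hB x))
    _ ≤ A * Real.exp (↑(max a b) * ‖x‖) + B * Real.exp (↑(max a b) * ‖x‖) := by
        gcongr
        exacts [le_max_left a b, le_max_right a b]
    _ = ↑(A + B) * Real.exp (↑(max a b) * ‖x‖) := by
        push_cast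
        ring

lemma sum {ι : Type*} (s : Finset ι) {g : ι → E → ℝ} (hg : ∀ i, ExpGrowth (g i)) :
    ExpGrowth fun x => ∑ i ∈ s, g i x := by
  induction s using Finset.cons_induction with
  | empty => simpa using const 0
  | cons i s hi ih => simpa only [Finset.sum_cons] using (hg i).add ih

lemma prod {ι : Type*} (s : Finset ι) {g : ι → E → ℝ} (hg : ∀ i, ExpGrowth (g i)) :
    ExpGrowth fun x => ∏ i ∈ s, g i x := by
  induction s using Finset.cons_induction with
  | empty => simpa using const 1
  | cons i s hi ih => simpa only [Finset.prod_cons] using (hg i).mul ih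

variable [NormedSpace ℝ E] [NormedSpace ℝ F]

lemma abs_clm_le_exp (L : E →L[ℝ] ℝ) (x : E) : |L x| ≤ Real.exp (‖L‖ * ‖x‖) :=
  (L.le_opNorm x).trans (by linarith [Real.add_one_le_exp (‖L‖ * ‖x‖)])

lemma exp_mul_clm_le_exp (L : E →L[ℝ] ℝ) {t : ℝ} (ht : |t| ≤ 1) (x : E) :
    Real.exp (t * L x) ≤ Real.exp (‖L‖ * ‖x‖) := by
  rw [Real.exp_le_exp]
  calc t * L x ≤ |t| * |L x| := (le_abs_self _).trans_eq (abs_mul _ _)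
    _ ≤ |L x| := mul_le_of_le_one_left (abs_nonneg _) ht
    _ ≤ ‖L‖ * ‖x‖ := L.le_opNorm x

lemma clm (L : E →L[ℝ] ℝ) : ExpGrowth L := ⟨1, ‖L‖₊, fun x => by simpa using abs_clm_le_exp L x⟩

lemma comp_clm_add_const {g : F → ℝ} (hg : ExpGrowth g) (L : E →L[ℝ] F) (y : F) :
    ExpGrowth fun x => g (L x + y) := by
  obtain ⟨A, a, hA⟩ := hg
  refine ⟨A * Real.toNNReal (Real.exp (a * ‖y‖)), a * ‖L‖₊, fun x => ?_⟩
  calc |g (L x + y)| ≤ A * Real.exp (a * ‖L x + y‖) := hA _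
    _ ≤ A * Real.exp (a * (‖L‖ * ‖x‖ + ‖y‖)) := by
        gcongr
        exact norm_add_le_of_le (L.le_opNorm x) le_rfl
    _ = ↑(A * Real.toNNReal (Real.exp (a * ‖y‖))) * Real.exp (↑(a * ‖L‖₊) * ‖x‖) := by
        rw [mul_add, Real.exp_add, ← mul_assoc (a : ℝ)]
        push_cast [Real.coe_toNNReal _ (Real.exp_pos _).le]
        ring

variable [MeasurableSpace E] [BorelSpace E] [SecondCountableTopology E] [CompleteSpace E]

-- By Fernique's theorem, since `a * ‖x‖ ≤ C * ‖x‖ ^ 2 + a ^ 2 / (4 * C)`.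
lemma integrable_exp_mul_norm (μ : Measure E) [IsGaussian μ] (a : ℝ) :
    Integrable (fun x => Real.exp (a * ‖x‖)) μ := by
  obtain ⟨C, hC, hint⟩ := IsGaussian.exists_integrable_exp_sq μ
  refine (hint.const_mul (Real.exp (a ^ 2 / (4 * C)))).mono' (by fun_prop) (.of_forall fun x => ?_)
  rw [Real.norm_of_nonneg (Real.exp_pos _).le, ← Real.exp_add, Real.exp_le_exp]
  have h : a ^ 2 / (4 * C) + C * ‖x‖ ^ 2 - a * ‖x‖ = (a - 2 * C * ‖x‖) ^ 2 / (4 * C) := by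
    field_simp
    ring
  have : 0 ≤ (a - 2 * C * ‖x‖) ^ 2 / (4 * C) := by positivity
  linarith

lemma integrable {g : E → ℝ} (hg : ExpGrowth g) (hgm : Measurable g) (μ : Measure E)
    [IsGaussian μ] : Integrable g μ := by
  obtain ⟨A, a, hA⟩ := hg
  exact ((integrable_exp_mul_norm μ a).const_mul (A : ℝ)).mono' hgm.aestronglyMeasurable
    (.of_forall hA)

lemma memLp_two {g : E → ℝ} (hg : ExpGrowth g) (hgm : Measurable g) (μ : Measure E)
    [IsGaussian μ] : MemLp g 2 μ := by
  rw [memLp_two_iff_integrable_sq hgm.aestronglyMeasurable]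
  simpa only [pow_two] using (hg.mul hg).integrable (hgm.mul hgm) μ

lemma hasDerivAt_integral_mul_exp {g : E → ℝ} (hg : ExpGrowth g) (hgm : Measurable g)
    (μ : Measure E) [IsGaussian μ] (L : E →L[ℝ] ℝ) :
    HasDerivAt (fun t => ∫ x, g x * Real.exp (t * L x) ∂μ) (∫ x, g x * L x ∂μ) 0 := by
  obtain ⟨A, a, hA⟩ := hg
  have key := hasDerivAt_integral_of_dominated_loc_of_deriv_le (μ := μ) (x₀ := (0 : ℝ))
    (F := fun t x => g x * Real.exp (t * L x)) (F' := fun t x => g x * (Real.exp (t * L x) * L x))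
    (bound := fun x => A * Real.exp ((a + 2 * ‖L‖) * ‖x‖)) (Metric.ball_mem_nhds 0 one_pos)
    (.of_forall fun t => by fun_prop) (by simpa using integrable ⟨A, a, hA⟩ hgm μ) (by fun_prop)
    (.of_forall fun x t ht => ?_) ((integrable_exp_mul_norm μ _).const_mul _)
    (.of_forall fun x t _ => ?_)
  · simpa using key.2
  · calc ‖g x * (Real.exp (t * L x) * L x)‖ = |g x| * (Real.exp (t * L x) * |L x|) := by
          simp
      _ ≤ A * Real.exp (a * ‖x‖) * (Real.exp (‖L‖ * ‖x‖) * Real.exp (‖L‖ * ‖x‖)) := by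
          have ht : |t| ≤ 1 := by simpa using (mem_ball_zero_iff.mp ht).le
          gcongr ?_ * (?_ * ?_)
          exacts [hA x, exp_mul_clm_le_exp L ht x, abs_clm_le_exp L x]
      _ = A * Real.exp ((a + 2 * ‖L‖) * ‖x‖) := by
          rw [mul_assoc, ← Real.exp_add, ← Real.exp_add]
          ring_nf
  · simpa using (((hasDerivAt_id t).mul_const (L x)).exp.const_mul (g x))

end ExpGrowth

lemma PolyBounded.expGrowth {σ : ℝ → ℝ} (hσ : PolyBounded σ) : ExpGrowth σ := by
  obtain ⟨C, hC, c, -, hb⟩ := hσ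
  refine ⟨(C * (c.factorial + 1)).toNNReal, 1, fun x => ?_⟩
  have pow_le : |x| ^ c ≤ c.factorial * Real.exp |x| := by
    have h := Real.pow_div_factorial_le_exp |x| (abs_nonneg x) c
    rwa [div_le_iff₀' (by positivity)] at h
  rw [Real.coe_toNNReal _ (by positivity), NNReal.coe_one, one_mul, Real.norm_eq_abs]
  calc |σ x| ≤ C * |x| ^ c + C * 1 := by simpa using hb x
    _ ≤ C * (c.factorial * Real.exp |x|) + C * Real.exp |x| := by
        gcongr
        exact Real.one_le_exp (abs_nonneg x)
    _ = C * (c.factorial + 1) * Real.exp |x| := by ring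

end ExpGrowth

/-! ### Gaussian integration by parts -/

section GaussianPi

lemma gaussianReal_eq_withDensity (t : ℝ) {s : ℝ≥0} (hs : s ≠ 0) :
    gaussianReal t s = (gaussianReal 0 s).withDensity fun x =>
      ENNReal.ofReal (Real.exp (t * x / s - t ^ 2 / (2 * s))) := by
  rw [gaussianReal_of_var_ne_zero t hs, gaussianReal_of_var_ne_zero 0 hs,
    ← withDensity_mul _ (measurable_gaussianPDF 0 s) (by fun_prop)]
  congr 1
  ext x
  have hs0 : (s : ℝ) ≠ 0 := by exact_mod_cast hs
  rw [Pi.mul_apply, gaussianPDF, gaussianPDF, ← ENNReal.ofReal_mul (gaussianPDFReal_nonneg _ _ _),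
    gaussianPDFReal, gaussianPDFReal, mul_assoc _⁻¹, ← Real.exp_add]
  congr 3
  field_simp
  ring

variable {ι : Type*} [Fintype ι]

lemma pi_withDensity {Ω : ι → Type*} [∀ i, MeasurableSpace (Ω i)] (μ : ∀ i, Measure (Ω i))
    [∀ i, IsProbabilityMeasure (μ i)] {ρ : ∀ i, Ω i → ℝ≥0∞} (hρ : ∀ i, Measurable (ρ i))
    [∀ i, SigmaFinite ((μ i).withDensity (ρ i))] :
    Measure.pi (fun i => (μ i).withDensity (ρ i))
      = (Measure.pi μ).withDensity fun x => ∏ i, ρ i (x i) := by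
  refine (Measure.pi_eq fun B hB => ?_)
  have indicator_prod (x : ∀ i, Ω i) : (Set.univ.pi B).indicator (fun x => ∏ i, ρ i (x i)) x
      = ∏ i, (B i).indicator (ρ i) (x i) := by
    by_cases hx : x ∈ Set.univ.pi B
    · rw [Set.indicator_of_mem hx]
      exact Finset.prod_congr rfl fun i _ => (Set.indicator_of_mem (hx i trivial) _).symm
    · obtain ⟨i, -, hi⟩ : ∃ i ∈ Set.univ, x i ∉ B i := by simpa [Set.mem_pi] using hx
      rw [Set.indicator_of_notMem hx,
        Finset.prod_eq_zero (Finset.mem_univ i) (Set.indicator_of_notMem hi _)]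
  have hmeas (i : ι) : Measurable ((B i).indicator (ρ i)) := (hρ i).indicator (hB i)
  rw [withDensity_apply _ (.univ_pi hB), ← lintegral_indicator (.univ_pi hB)]
  simp_rw [indicator_prod]
  rw [lintegral_prod_eq_prod_lintegral_of_indepFun univ
    (fun i (x : ∀ i, Ω i) => (B i).indicator (ρ i) (x i))
    (iIndepFun_pi fun i => (hmeas i).aemeasurable) fun i => (hmeas i).comp (measurable_pi_apply i)]
  refine Finset.prod_congr rfl fun i _ => ?_
  rw [withDensity_apply _ (hB i), ← lintegral_indicator (hB i)]
  exact (measurePreserving_eval μ i).lintegral_comp (hmeas i)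

lemma ExpGrowth.eval (i : ι) : ExpGrowth fun w : ι → ℝ => w i :=
  clm (ContinuousLinearMap.proj (φ := fun _ : ι => ℝ) i)

/-- The law of `ι` independent `N(0, s)` variables, which is the weight part of `initMeasure`. -/
abbrev gaussianPi (ι : Type*) [Fintype ι] (s : ℝ≥0) : Measure (ι → ℝ) :=
  Measure.pi fun _ => gaussianReal 0 s

instance isGaussian_gaussianPi (s : ℝ≥0) : IsGaussian (gaussianPi ι s) := by
  have eval_law (i : ι) : HasGaussianLaw (fun w : ι → ℝ => w i) (gaussianPi ι s) := by
    constructor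
    rw [(measurePreserving_eval (fun _ : ι => gaussianReal 0 s) i).map_eq]
    infer_instance
  have h := (iIndepFun.hasGaussianLaw (X := fun i (w : ι → ℝ) => w i) eval_law
    (iIndepFun_pi fun i => aemeasurable_id)).isGaussian_map
  rwa [show (fun (w : ι → ℝ) i => w i) = id from rfl, Measure.map_id] at h

lemma map_sum_gaussianPi (s : ℝ≥0) :
    (gaussianPi ι s).map (fun w => ∑ i, w i) = gaussianReal 0 (Fintype.card ι * s) := by
  have mean : ∫ w, ∑ i, w i ∂gaussianPi ι s = 0 := by
    rw [integral_finsetSum _ fun i _ => ?_]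
    · refine Finset.sum_eq_zero fun i _ => ?_
      rw [integral_comp_eval (μ := fun _ : ι => gaussianReal 0 s) (f := fun y => y) (by fun_prop),
        integral_id_gaussianReal]
    · exact (ExpGrowth.eval i).integrable (by fun_prop) _
  have var : Var[fun w => ∑ i, w i; gaussianPi ι s] = Fintype.card ι * s := by
    have h := variance_sum_pi (μ := fun _ : ι => gaussianReal 0 s) (X := fun _ y => y)
      fun _ => memLp_id_gaussianReal 2
    simpa [Finset.sum_fn] using h
  have law : HasGaussianLaw (fun w : ι → ℝ => ∑ i, w i) (gaussianPi ι s) :=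
    HasGaussianLaw.fun_sum (X := fun i (w : ι → ℝ) => w i) IsGaussian.hasGaussianLaw_id
  rw [law.map_eq_gaussianReal, mean, var]
  congr
  exact_mod_cast Real.toNNReal_coe (r := Fintype.card ι * s)

lemma map_add_gaussianPi (s : ℝ≥0) (v : ι → ℝ) :
    (gaussianPi ι s).map (· + v) = Measure.pi fun i => gaussianReal (v i) s := by
  have h := Measure.pi_map_pi (μ := fun _ : ι => gaussianReal 0 s) (f := fun i y => y + v i)
    fun i => by fun_prop
  simp_rw [gaussianReal_map_add_const, zero_add] at h
  exact h

lemma integral_gaussianPi_comp_add {s : ℝ≥0} (hs : s ≠ 0) (g : (ι → ℝ) → ℝ) (v : ι → ℝ) :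
    ∫ w, g (w + v) ∂gaussianPi ι s
      = ∫ w, g w * Real.exp (∑ i, (v i * w i / s - v i ^ 2 / (2 * s))) ∂gaussianPi ι s := by
  have density : Measure.pi (fun i => gaussianReal (v i) s) = (gaussianPi ι s).withDensity fun w =>
      ENNReal.ofReal (Real.exp (∑ i, (v i * w i / s - v i ^ 2 / (2 * s)))) := by
    have (i : ι) : SigmaFinite ((gaussianReal 0 s).withDensity fun x =>
        ENNReal.ofReal (Real.exp (v i * x / s - v i ^ 2 / (2 * s)))) := by
      rw [← gaussianReal_eq_withDensity (v i) hs]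
      infer_instance
    simp_rw [fun i => gaussianReal_eq_withDensity (v i) hs, Real.exp_sum,
      ENNReal.ofReal_prod_of_nonneg fun _ _ => (Real.exp_pos _).le]
    exact pi_withDensity _ fun i => by fun_prop
  calc ∫ w, g (w + v) ∂gaussianPi ι s = ∫ w, g w ∂(gaussianPi ι s).map (· + v) :=
        (integral_map_equiv (MeasurableEquiv.addRight v) g).symm
    _ = _ := by
        rw [map_add_gaussianPi, density, integral_withDensity_eq_integral_toReal_smul (by fun_prop)
          (.of_forall fun _ => ENNReal.ofReal_lt_top)]
        simp_rw [ENNReal.toReal_ofReal (Real.exp_pos _).le, smul_eq_mul, mul_comm]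

variable [DecidableEq ι]

lemma integral_gaussianPi_comp_add_single {s : ℝ≥0} (hs : s ≠ 0) (g : (ι → ℝ) → ℝ) (j : ι)
    (t : ℝ) :
    ∫ w, g (w + Pi.single j t) ∂gaussianPi ι s
      = Real.exp (-(t ^ 2 / (2 * s))) * ∫ w, g w * Real.exp (t / s * w j) ∂gaussianPi ι s := by
  rw [integral_gaussianPi_comp_add hs, ← integral_const_mul]
  refine integral_congr_ae (.of_forall fun w => ?_)
  dsimp only
  rw [Finset.sum_eq_single j (fun i _ hij => by simp [hij]) (by simp), Pi.single_eq_same,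
    sub_eq_neg_add, Real.exp_add, mul_div_right_comm]
  ring

lemma hasDerivAt_integral_gaussianPi_comp_add_single {s : ℝ≥0} (hs : s ≠ 0) {g : (ι → ℝ) → ℝ}
    (hg : ExpGrowth g) (hgm : Measurable g) (j : ι) :
    HasDerivAt (fun t => ∫ w, g (w + Pi.single j t) ∂gaussianPi ι s)
      ((s : ℝ)⁻¹ * ∫ w, g w * w j ∂gaussianPi ι s) 0 := by
  have gauss : HasDerivAt (fun t : ℝ => Real.exp (-(t ^ 2 / (2 * s)))) 0 0 := by
    simpa using (((hasDerivAt_id (0 : ℝ)).pow 2).div_const (2 * s : ℝ)).neg.exp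
  have tilt : HasDerivAt (fun t => ∫ w, g w * Real.exp (t / s * w j) ∂gaussianPi ι s)
      ((∫ w, g w * w j ∂gaussianPi ι s) * (1 / s)) 0 :=
    HasDerivAt.comp_of_eq (h := fun t => t / (s : ℝ)) 0
      (hg.hasDerivAt_integral_mul_exp hgm (gaussianPi ι s) (ContinuousLinearMap.proj j))
      ((hasDerivAt_id 0).div_const (s : ℝ)) (zero_div _).symm
  simp_rw [integral_gaussianPi_comp_add_single hs]
  refine (gauss.mul tilt).congr_deriv ?_
  simp [mul_comm]

end GaussianPi

/-! ### Derivatives of the Gaussian smoothing -/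

section GaussMoment

variable {ι : Type*} [Fintype ι] {σ : ℝ → ℝ} {s : ℝ≥0}

lemma ExpGrowth.comp_sum_mul_add (hσ : ExpGrowth σ) (a : ι → ℝ) (t : ℝ) :
    ExpGrowth fun w : ι → ℝ => σ (∑ i, w i * a i + t) := by
  simpa [mul_comm] using hσ.comp_clm_add_const
    (∑ i, a i • ContinuousLinearMap.proj (R := ℝ) (φ := fun _ : ι => ℝ) i) t

/-- The mixed moment `E[σ(∑ᵢ wᵢ + t) ∏_{i ∈ S} wᵢ]` of independent `wᵢ ∼ N(0, s)`. Up to powers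
of `s` these are the derivatives of the Gaussian smoothing of `σ`. -/
def gaussMoment (σ : ℝ → ℝ) (s : ℝ≥0) (S : Finset ι) (t : ℝ) : ℝ :=
  ∫ w, σ (∑ i, w i + t) * ∏ i ∈ S, w i ∂gaussianPi ι s

lemma gaussMoment_empty (hσm : Measurable σ) :
    gaussMoment σ s (∅ : Finset ι) = gsmooth σ (Fintype.card ι * s) := by
  ext t
  have hvar : ((Fintype.card ι : ℝ) * s).toNNReal = Fintype.card ι * s :=
    mod_cast Real.toNNReal_coe (r := Fintype.card ι * s)
  rw [gsmooth, hvar, ← map_sum_gaussianPi,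
    integral_map (by fun_prop) (by fun_prop : Measurable _).aestronglyMeasurable]
  simp [gaussMoment]

lemma hasDerivAt_gaussMoment [DecidableEq ι] (hs : s ≠ 0) (hσ : ExpGrowth σ) (hσm : Measurable σ)
    {S : Finset ι} {j : ι} (hj : j ∉ S) (t : ℝ) :
    HasDerivAt (gaussMoment σ s S) ((s : ℝ)⁻¹ * gaussMoment σ s (insert j S) t) t := by
  have growth : ExpGrowth fun w : ι → ℝ => σ (∑ i, w i + t) * ∏ i ∈ S, w i :=
    .mul (by simpa using hσ.comp_sum_mul_add 1 t) (.prod S .eval)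
  have deriv_shift := hasDerivAt_integral_gaussianPi_comp_add_single hs growth (by fun_prop) j
  have shift (u : ℝ) (w : ι → ℝ) :
      σ (∑ i, (w + Pi.single j u : ι → ℝ) i + t) * ∏ i ∈ S, (w + Pi.single j u : ι → ℝ) i
        = σ (∑ i, w i + (u + t)) * ∏ i ∈ S, w i := by
    congr 1
    · simp [Finset.sum_add_distrib, add_assoc]
    · refine Finset.prod_congr rfl fun _ hi => ?_
      simp [ne_of_mem_of_not_mem hi hj]
  simp_rw [shift, mul_assoc, mul_comm (∏ _ ∈ S, _), ← Finset.prod_insert hj] at deriv_shift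
  rw [← sub_self t] at deriv_shift
  simpa only [sub_add_cancel] using! deriv_shift.comp_sub_const t t

lemma iteratedDeriv_gsmooth (hs : s ≠ 0) (hσ : ExpGrowth σ) (hσm : Measurable σ)
    (S : Finset ι) :
    iteratedDeriv #S (gsmooth σ (Fintype.card ι * s))
      = fun t => (s : ℝ)⁻¹ ^ #S * gaussMoment σ s S t := by
  classical
  induction S using Finset.induction_on with
  | empty => simp [gaussMoment_empty hσm]
  | insert j S hj ih =>
    ext t
    rw [Finset.card_insert_of_notMem hj, iteratedDeriv_succ, ih,
      ((hasDerivAt_gaussMoment hs hσ hσm hj t).const_mul _).deriv, pow_succ, mul_assoc]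

lemma hasDerivAt_iteratedDeriv_gsmooth (hs : s ≠ 0) (hσ : ExpGrowth σ) (hσm : Measurable σ)
    (k : ℕ) (t : ℝ) :
    HasDerivAt (iteratedDeriv k (gsmooth σ s)) (iteratedDeriv (k + 1) (gsmooth σ s) t) t := by
  -- Split `N(0, s)` into `k + 1` independent summands.
  have hs' : s / (k + 1 : ℕ) ≠ 0 := by positivity
  have hvar : (Fintype.card (Fin (k + 1)) : ℝ) * (s / (k + 1 : ℕ) : ℝ≥0) = s := by
    push_cast [Fintype.card_fin]
    field_simp
  have h := iteratedDeriv_gsmooth hs' hσ hσm (univ.erase (Fin.last k))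
  rw [hvar, Finset.card_erase_of_mem (Finset.mem_univ _), Finset.card_univ, Fintype.card_fin,
    Nat.add_sub_cancel] at h
  rw [iteratedDeriv_succ]
  refine DifferentiableAt.hasDerivAt ?_
  rw [h]
  exact (hasDerivAt_gaussMoment hs' hσ hσm (Finset.notMem_erase _ _) t).differentiableAt.const_mul _

end GaussMoment

/-! ### Fourier weight of a level against the correlation with a random neuron -/

section LevelWeight

lemma inner_toLp_toLp {Ω : Type*} [MeasurableSpace Ω] {μ : Measure Ω} {g h : Ω → ℝ}
    (hg : MemLp g 2 μ) (hh : MemLp h 2 μ) :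
    inner ℝ (hg.toLp g) (hh.toLp h) = ∫ ω, g ω * h ω ∂μ := by
  rw [L2.inner_def]
  refine integral_congr_ae ?_
  filter_upwards [hg.coeFn_toLp, hh.coeFn_toLp] with ω hgω hhω
  simp [hgω, hhω, mul_comm]

lemma sum_sq_integral_mul_le {Ω ι : Type*} [MeasurableSpace Ω] [DecidableEq ι] {μ : Measure Ω}
    {F : Ω → ℝ} {u : ι → Ω → ℝ} (hF : MemLp F 2 μ) (hu : ∀ i, MemLp (u i) 2 μ)
    (orth : ∀ i j, ∫ ω, u i ω * u j ω ∂μ = if i = j then 1 else 0) (I : Finset ι) :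
    ∑ i ∈ I, (∫ ω, F ω * u i ω ∂μ) ^ 2 ≤ ∫ ω, F ω ^ 2 ∂μ := by
  have orthonormal : Orthonormal ℝ fun i => (hu i).toLp (u i) := by
    rw [orthonormal_iff_ite]
    exact fun i j => (inner_toLp_toLp (hu i) (hu j)).trans (orth i j)
  have bessel := orthonormal.sum_inner_products_le (hF.toLp F) (s := I)
  simpa only [real_inner_comm, inner_toLp_toLp, ← real_inner_self_eq_norm_sq, Real.norm_eq_abs,
    sq_abs, ← pow_two] using bessel

section Monomials

variable {ι : Type*} [Fintype ι] (s : ℝ≥0)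

lemma memLp_two_prod_gaussianPi (S : Finset ι) :
    MemLp (fun w : ι → ℝ => ∏ i ∈ S, w i) 2 (gaussianPi ι s) :=
  (ExpGrowth.prod S .eval).memLp_two (by fun_prop) _

lemma integral_mul_self_gaussianReal : ∫ y, y * y ∂gaussianReal 0 s = s := by
  have h := variance_fun_id_gaussianReal (μ := 0) (v := s)
  rw [variance_of_integral_eq_zero (by fun_prop) integral_id_gaussianReal] at h
  simpa only [pow_two] using h

lemma integral_prod_mul_prod_gaussianPi [DecidableEq ι] (S T : Finset ι) :
    ∫ w, (∏ i ∈ S, w i) * ∏ i ∈ T, w i ∂gaussianPi ι s = if S = T then (s : ℝ) ^ #S else 0 := by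
  have pointwise (w : ι → ℝ) : (∏ i ∈ S, w i) * ∏ i ∈ T, w i
      = ∏ i, (if i ∈ S then w i else 1) * (if i ∈ T then w i else 1) := by
    rw [Finset.prod_mul_distrib, Fintype.prod_ite_mem, Fintype.prod_ite_mem]
  simp_rw [pointwise]
  rw [integral_fintype_prod_eq_prod (fun i (y : ℝ) =>
    (if i ∈ S then y else 1) * (if i ∈ T then y else 1))]
  split_ifs with hST
  · subst hST
    have factor (i : ι) : ∫ y, (if i ∈ S then y else 1) * (if i ∈ S then y else 1) ∂gaussianReal 0 s
        = if i ∈ S then (s : ℝ) else 1 := by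
      split_ifs <;> simp [integral_mul_self_gaussianReal]
    simp_rw [factor, Fintype.prod_ite_mem, Finset.prod_const]
  · obtain ⟨i, hi⟩ : ∃ i, ¬(i ∈ S ↔ i ∈ T) := by simpa [Finset.ext_iff] using hST
    refine Finset.prod_eq_zero (Finset.mem_univ i) ?_
    by_cases hS : i ∈ S <;> by_cases hT : i ∈ T <;> simp_all [integral_id_gaussianReal]

end Monomials

variable {n : ℕ} {σ : ℝ → ℝ}

/-- The correlation `E_x[f(x) σ(wᵀx + b)]` of `f` with the neuron `(w, b)`. -/
def neuronCorr (f : (Fin n → Bool) → ℝ) (σ : ℝ → ℝ) (w : Fin n → ℝ) (b : ℝ) : ℝ :=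
  bExp n fun x => f x * σ (∑ i, w i * bsign (x i) + b)

/-- The Fourier weight `∑_{#S = k} f̂(S)²` at level `k`. -/
def levelWeight (n k : ℕ) (f : (Fin n → Bool) → ℝ) : ℝ :=
  ∑ S : Finset (Fin n) with #S = k, fourierCoef n f S ^ 2

lemma ExpGrowth.bExp {E : Type*} [NormedAddCommGroup E] {g : (Fin n → Bool) → E → ℝ}
    (hg : ∀ x, ExpGrowth (g x)) : ExpGrowth fun y => bExp n fun x => g x y := by
  simpa only [_root_.bExp, div_eq_mul_inv] using (sum univ hg).mul (const _)

lemma integral_bExp {Ω : Type*} [MeasurableSpace Ω] {μ : Measure Ω} {g : (Fin n → Bool) → Ω → ℝ}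
    (hg : ∀ x, Integrable (g x) μ) :
    ∫ ω, bExp n (fun x => g x ω) ∂μ = bExp n fun x => ∫ ω, g x ω ∂μ := by
  simp only [bExp]
  rw [integral_div, integral_finsetSum _ fun x _ => hg x]

lemma measurable_neuronCorr (hσm : Measurable σ) (f : (Fin n → Bool) → ℝ) :
    Measurable (Function.uncurry (neuronCorr f σ)) := by
  unfold Function.uncurry neuronCorr bExp
  fun_prop

lemma measurePreserving_mul_bsign (s : ℝ≥0) (x : Fin n → Bool) :
    MeasurePreserving (fun (w : Fin n → ℝ) i => w i * bsign (x i)) (gaussianPi (Fin n) s)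
      (gaussianPi (Fin n) s) := by
  refine measurePreserving_pi (fun _ => gaussianReal 0 s) (fun _ => gaussianReal 0 s)
    (f := fun i y => y * bsign (x i)) fun i => ⟨by fun_prop, ?_⟩
  cases x i <;> simp [bsign, gaussianReal_map_neg]

lemma integral_comp_sum_mul_bsign_mul_prod (hσm : Measurable σ) (s : ℝ≥0) (S : Finset (Fin n))
    (x : Fin n → Bool) (b : ℝ) :
    ∫ w, σ (∑ i, w i * bsign (x i) + b) * ∏ i ∈ S, w i ∂gaussianPi (Fin n) s
      = chi S x * gaussMoment σ s S b := by
  have flip := measurePreserving_mul_bsign s x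
  have change_var := integral_map flip.aemeasurable (f := fun w => σ (∑ i, w i + b) * ∏ i ∈ S, w i)
    (by fun_prop : Measurable _).aestronglyMeasurable
  rw [flip.map_eq] at change_var
  rw [gaussMoment, change_var, ← integral_const_mul]
  refine integral_congr_ae (.of_forall fun w => ?_)
  have : ∏ i ∈ S, w i = chi S x * ∏ i ∈ S, w i * bsign (x i) := by
    rw [chi, ← Finset.prod_mul_distrib]
    exact Finset.prod_congr rfl fun i _ => by linear_combination (-w i) * bsign_mul_self (x i)
  dsimp only
  rw [this]
  ring

lemma integral_neuronCorr_mul_prod (hσ : ExpGrowth σ) (hσm : Measurable σ) (s : ℝ≥0)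
    (f : (Fin n → Bool) → ℝ) (S : Finset (Fin n)) (b : ℝ) :
    ∫ w, neuronCorr f σ w b * ∏ i ∈ S, w i ∂gaussianPi (Fin n) s
      = fourierCoef n f S * gaussMoment σ s S b := by
  have integrable (x : Fin n → Bool) : Integrable
      (fun w => f x * (σ (∑ i, w i * bsign (x i) + b) * ∏ i ∈ S, w i)) (gaussianPi (Fin n) s) :=
    ((ExpGrowth.const (f x)).mul
      ((hσ.comp_sum_mul_add _ b).mul (.prod S .eval))).integrable (by fun_prop) _
  simp_rw [neuronCorr, mul_comm (bExp _ _), ← bExp_const_mul, mul_left_comm (∏ _ ∈ S, _),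
    mul_comm (∏ _ ∈ S, _)]
  rw [integral_bExp integrable, fourierCoef, mul_comm, ← bExp_const_mul]
  congr with x
  rw [integral_const_mul, integral_comp_sum_mul_bsign_mul_prod hσm]
  ring

lemma integral_normalized_prod_mul_prod {ι : Type*} [Fintype ι] [DecidableEq ι] {s : ℝ≥0}
    (hs : s ≠ 0) (S T : Finset ι) :
    ∫ w, (√(s : ℝ)⁻¹ ^ #S * ∏ i ∈ S, w i) * (√(s : ℝ)⁻¹ ^ #T * ∏ i ∈ T, w i) ∂gaussianPi ι s
      = if S = T then 1 else 0 := by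
  have regroup (w : ι → ℝ) : (√(s : ℝ)⁻¹ ^ #S * ∏ i ∈ S, w i) * (√(s : ℝ)⁻¹ ^ #T * ∏ i ∈ T, w i)
      = √(s : ℝ)⁻¹ ^ #S * √(s : ℝ)⁻¹ ^ #T * ((∏ i ∈ S, w i) * ∏ i ∈ T, w i) :=
    mul_mul_mul_comm _ _ _ _
  simp_rw [regroup]
  rw [integral_const_mul, integral_prod_mul_prod_gaussianPi]
  split_ifs with hST
  · subst hST
    rw [← mul_pow, ← mul_pow, Real.mul_self_sqrt (by positivity), inv_mul_cancel₀ (by positivity),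
      one_pow]
  · rw [mul_zero]

lemma levelWeight_mul_sq_iteratedDeriv_le {s : ℝ≥0} (hs : s ≠ 0) (hσ : ExpGrowth σ)
    (hσm : Measurable σ) (f : (Fin n → Bool) → ℝ) (k : ℕ) (b : ℝ) :
    levelWeight n k f * iteratedDeriv k (gsmooth σ (n * s)) b ^ 2
      ≤ (s : ℝ)⁻¹ ^ k * ∫ w, neuronCorr f σ w b ^ 2 ∂gaussianPi (Fin n) s := by
  have hF : MemLp (fun w => neuronCorr f σ w b) 2 (gaussianPi (Fin n) s) :=
    ExpGrowth.memLp_two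
      (ExpGrowth.bExp fun x => (ExpGrowth.const (f x)).mul (hσ.comp_sum_mul_add _ b))
      (measurable_neuronCorr hσm f).of_uncurry_right _
  have bessel := sum_sq_integral_mul_le hF
    (fun S : Finset (Fin n) => (memLp_two_prod_gaussianPi s S).const_mul (√(s : ℝ)⁻¹ ^ #S))
    (integral_normalized_prod_mul_prod hs) {S | #S = k}
  have term (S : Finset (Fin n)) (hS : #S = k) :
      fourierCoef n f S ^ 2 * iteratedDeriv k (gsmooth σ (n * s)) b ^ 2
        = (s : ℝ)⁻¹ ^ k * (∫ w, neuronCorr f σ w b * (√(s : ℝ)⁻¹ ^ #S * ∏ i ∈ S, w i)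
          ∂gaussianPi (Fin n) s) ^ 2 := by
    have deriv_eq := congr_fun (iteratedDeriv_gsmooth hs hσ hσm S) b
    rw [Fintype.card_fin, hS] at deriv_eq
    have sqrt_sq : (√(s : ℝ)⁻¹ ^ k) ^ 2 = (s : ℝ)⁻¹ ^ k := by
      rw [← pow_mul, mul_comm, pow_mul, Real.sq_sqrt (by positivity)]
    simp_rw [mul_left_comm (neuronCorr _ _ _ _)]
    rw [integral_const_mul, integral_neuronCorr_mul_prod hσ hσm, deriv_eq, hS, mul_pow (√_ ^ k),
      sqrt_sq]
    ring
  rw [levelWeight, Finset.sum_mul, Finset.sum_congr rfl fun S hS => term S (by simpa using hS),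
    ← Finset.mul_sum]
  exact mul_le_mul_of_nonneg_left bessel (by positivity)

end LevelWeight

/-! ### Averaging over the bias -/

section Bias

lemma isBigO_id_nhds_zero_of_hasDerivAt {h : ℝ → ℝ} {d : ℝ} (hd : HasDerivAt h d 0)
    (hne : h 0 ≠ 0 ∨ d ≠ 0) : (fun b : ℝ => b) =O[nhds 0] h := by
  by_cases h0 : h 0 = 0
  · simpa [h0, Function.comp_def] using
      (hd.isTheta_sub (hne.resolve_left (not_not.mpr h0))).isBigO_symm
  · exact (isBigO_const_of_tendsto tendsto_id h0).trans
      ((isEquivalent_const_iff_tendsto h0).mpr hd.continuousAt).symm.isBigO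

lemma gaussianReal_Icc_sqrt {v : ℝ≥0} (hv : v ≠ 0) :
    (gaussianReal 0 v).real (Set.Icc (√v) (2 * √v)) = (gaussianReal 0 1).real (Set.Icc 1 2) := by
  have scale : (gaussianReal 0 1).map (√v * ·) = gaussianReal 0 v := by
    rw [gaussianReal_map_const_mul]
    congr 1
    · simp
    · ext; simp
  have sqrt_pos : 0 < √(v : ℝ) := by positivity
  rw [← scale, map_measureReal_apply (by fun_prop) measurableSet_Icc,
    Set.preimage_const_mul_Icc₀ _ _ sqrt_pos, div_self sqrt_pos.ne',
    mul_div_cancel_right₀ _ sqrt_pos.ne']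

lemma gaussianReal_Icc_one_two_pos : 0 < (gaussianReal 0 1).real (Set.Icc 1 2) := by
  refine measureReal_nonneg.lt_of_ne' fun h0 => ?_
  rw [measureReal_eq_zero_iff] at h0
  simpa using gaussianReal_absolutelyContinuous' 0 one_ne_zero h0

lemma eventually_mul_le_sq_on_Icc_sqrt {h : ℝ → ℝ} (hh : (fun b : ℝ => b) =O[nhds 0] h) :
    ∃ a > 0, ∀ᶠ v : ℝ≥0 in nhds 0, ∀ b ∈ Set.Icc (√v) (2 * √v), a * v ≤ h b ^ 2 := by
  obtain ⟨C, hC, bound⟩ := hh.exists_pos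
  have tendsto_Icc : Tendsto (fun v : ℝ≥0 => Set.Icc (√v) (2 * √v)) (nhds 0)
      (nhds 0).smallSets :=
    Tendsto.Icc (l₁ := nhds (0 : ℝ)) (Continuous.tendsto' (by fun_prop) _ _ (by simp))
      (Continuous.tendsto' (by fun_prop) _ _ (by simp))
  refine ⟨(C ^ 2)⁻¹, by positivity, ?_⟩
  filter_upwards [tendsto_Icc.eventually (eventually_smallSets_forall.mpr bound.bound)]
    with v hv b hb
  rw [inv_mul_le_iff₀ (by positivity)]
  calc (v : ℝ) = √v ^ 2 := (Real.sq_sqrt v.coe_nonneg).symm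
    _ ≤ ‖b‖ ^ 2 := by
        gcongr
        exact hb.1.trans (Real.le_norm_self b)
    _ ≤ (C * ‖h b‖) ^ 2 := by
        gcongr
        exact hv b hb
    _ = C ^ 2 * h b ^ 2 := by rw [mul_pow, Real.norm_eq_abs, sq_abs]

lemma eventually_mul_le_integral_gaussianReal {h : ℝ → ℝ} (hh : (fun b : ℝ => b) =O[nhds 0] h) :
    ∃ C, ∀ᶠ v : ℝ≥0 in nhdsWithin 0 {0}ᶜ, ∀ (W : ℝ) (G : ℝ → ℝ), 0 ≤ W → 0 ≤ G →
      Integrable G (gaussianReal 0 v) → (∀ b, W * h b ^ 2 ≤ G b) →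
        W * v ≤ C * ∫ b, G b ∂gaussianReal 0 v := by
  obtain ⟨a, ha, ev⟩ := eventually_mul_le_sq_on_Icc_sqrt hh
  set p := (gaussianReal 0 1).real (Set.Icc 1 2)
  have p_pos : 0 < p := gaussianReal_Icc_one_two_pos
  refine ⟨(a * p)⁻¹, ?_⟩
  filter_upwards [ev.filter_mono nhdsWithin_le_nhds, self_mem_nhdsWithin]
    with v hv v_ne_zero W G hW hG hint hWG
  have Icc_subset : Set.Icc (√v) (2 * √v) ⊆ {b | W * (a * v) ≤ G b} := fun b hb =>
    (mul_le_mul_of_nonneg_left (hv b hb) hW).trans (hWG b)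
  rw [le_inv_mul_iff₀ (by positivity)]
  calc a * p * (W * v) = W * (a * v) * (gaussianReal 0 v).real (Set.Icc (√v) (2 * √v)) := by
        rw [gaussianReal_Icc_sqrt v_ne_zero]
        ring
    _ ≤ W * (a * v) * (gaussianReal 0 v).real {b | W * (a * v) ≤ G b} := by
        gcongr
        exact measure_ne_top _ _
    _ ≤ ∫ b, G b ∂gaussianReal 0 v :=
        mul_meas_ge_le_integral_of_nonneg (.of_forall hG) hint _

variable {n : ℕ} {σ : ℝ → ℝ}

lemma integrable_sq_neuronCorr (hσ : ExpGrowth σ) (hσm : Measurable σ) (f : (Fin n → Bool) → ℝ)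
    (μ : Measure ((Fin n → ℝ) × ℝ)) [IsGaussian μ] :
    Integrable (fun θ => neuronCorr f σ θ.1 θ.2 ^ 2) μ := by
  have growth : ExpGrowth (Function.uncurry (neuronCorr f σ)) := by
    refine ExpGrowth.bExp fun x => (ExpGrowth.const (f x)).mul ?_
    simpa [Finset.sum_apply, mul_comm] using hσ.comp_clm_add_const (∑ i, bsign (x i) •
      (ContinuousLinearMap.proj i).comp (ContinuousLinearMap.fst ℝ (Fin n → ℝ) ℝ)
        + ContinuousLinearMap.snd ℝ (Fin n → ℝ) ℝ) 0
  exact (growth.memLp_two (measurable_neuronCorr hσm f) μ).integrable_sq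

instance isGaussian_initMeasure (n : ℕ) : IsGaussian (initMeasure n) :=
  inferInstanceAs (IsGaussian ((gaussianPi (Fin n) (n : ℝ≥0)⁻¹).prod _))

lemma INAL_eq_integral_integral (hσ : ExpGrowth σ) (hσm : Measurable σ) (f : (Fin n → Bool) → ℝ) :
    INAL n f σ = ∫ b, ∫ w, neuronCorr f σ w b ^ 2 ∂gaussianPi (Fin n) (n : ℝ≥0)⁻¹
      ∂gaussianReal 0 (n : ℝ≥0)⁻¹ :=
  integral_prod_symm _ (integrable_sq_neuronCorr hσ hσm f (initMeasure n))

lemma levelWeight_nonneg (n k : ℕ) (f : (Fin n → Bool) → ℝ) : 0 ≤ levelWeight n k f :=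
  Finset.sum_nonneg fun _ _ => sq_nonneg _

lemma eventually_levelWeight_le_INAL (hσ : ExpGrowth σ) (hσm : Measurable σ) {k : ℕ}
    (hne : iteratedDeriv k (gsmooth σ 1) 0 ≠ 0 ∨ iteratedDeriv (k + 1) (gsmooth σ 1) 0 ≠ 0) :
    ∃ C, ∀ᶠ n : ℕ in atTop, ∀ f : (Fin n → Bool) → ℝ,
      levelWeight n k f ≤ C * ((n : ℝ) ^ (k + 1) * INAL n f σ) := by
  have deriv := hasDerivAt_iteratedDeriv_gsmooth (one_ne_zero : (1 : ℝ≥0) ≠ 0) hσ hσm k 0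
  obtain ⟨C, ev⟩ := eventually_mul_le_integral_gaussianReal
    (isBigO_id_nhds_zero_of_hasDerivAt deriv hne)
  have tendsto_inv : Tendsto (fun n : ℕ => (n : ℝ≥0)⁻¹) atTop (nhdsWithin 0 {0}ᶜ) :=
    tendsto_nhdsWithin_iff.mpr ⟨tendsto_inv_atTop_nhds_zero_nat, (eventually_ne_atTop 0).mono
      fun n hn => by simpa using hn⟩
  refine ⟨C, ?_⟩
  filter_upwards [tendsto_inv.eventually ev, eventually_ne_atTop 0] with n hn n_ne_zero f
  have smoothing (b : ℝ) := levelWeight_mul_sq_iteratedDeriv_le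
    (inv_ne_zero (Nat.cast_ne_zero.mpr n_ne_zero)) hσ hσm f k b (s := (n : ℝ≥0)⁻¹)
  simp only [NNReal.coe_inv, NNReal.coe_natCast, inv_inv,
    mul_inv_cancel₀ (Nat.cast_ne_zero.mpr n_ne_zero : (n : ℝ) ≠ 0)] at smoothing
  have integrable := integrable_sq_neuronCorr hσ hσm f (initMeasure n)
  have key := hn (levelWeight n k f) _ (levelWeight_nonneg n k f) (fun b => by positivity)
    (integrable.integral_prod_right.const_mul ((n : ℝ) ^ k)) smoothing
  rw [integral_const_mul, ← INAL_eq_integral_integral hσ hσm, NNReal.coe_inv, NNReal.coe_natCast,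
    mul_inv_le_iff₀ (by positivity)] at key
  exact key.trans_eq (by ring)

end Bias

/-! ### Asymptotics -/

section Asymptotics

variable {σ : ℝ → ℝ} {f : ∀ n : ℕ, (Fin n → Bool) → ℝ} {c ε : ℝ}

lemma isBigO_natCast_rpow_of_le {a b : ℝ} (hab : a ≤ b) :
    (fun n : ℕ => (n : ℝ) ^ a) =O[atTop] fun n : ℕ => (n : ℝ) ^ b := by
  refine IsBigO.of_norm_eventuallyLE ?_
  filter_upwards [eventually_ge_atTop 1] with n hn
  rw [Real.norm_of_nonneg (by positivity)]
  exact Real.rpow_le_rpow_of_exponent_le (by exact_mod_cast hn) hab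

lemma levelWeight_isBigO (hσ : ExpGrowth σ) (hσm : Measurable σ) {k : ℕ}
    (hne : iteratedDeriv k (gsmooth σ 1) 0 ≠ 0 ∨ iteratedDeriv (k + 1) (gsmooth σ 1) 0 ≠ 0)
    (hINAL : (fun n : ℕ => INAL n (f n) σ) =O[atTop] fun n : ℕ => (n : ℝ) ^ (-c)) :
    (fun n : ℕ => levelWeight n k (f n)) =O[atTop] fun n : ℕ => (n : ℝ) ^ (k + 1 - c) := by
  obtain ⟨C, ev⟩ := eventually_levelWeight_le_INAL hσ hσm hne
  have level_le : (fun n : ℕ => levelWeight n k (f n)) =O[atTop]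
      fun n : ℕ => C * ((n : ℝ) ^ (k + 1) * INAL n (f n) σ) := by
    refine IsBigO.of_norm_eventuallyLE (ev.mono fun n hn => ?_)
    exact (Real.norm_of_nonneg (levelWeight_nonneg n k (f n))).trans_le (hn (f n))
  refine (level_le.trans (((isBigO_refl _ _).mul hINAL).const_mul_left C)).congr' .rfl ?_
  filter_upwards [eventually_gt_atTop 0] with n hn
  rw [← Real.rpow_natCast, ← Real.rpow_add (by exact_mod_cast hn), sub_eq_add_neg]
  push_cast
  rfl

lemma weightLT_eq_sum_levelWeight (n K : ℕ) (f : (Fin n → Bool) → ℝ) :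
    weightLT n K f = ∑ k ∈ range K, levelWeight n k f := by
  simp only [weightLT, levelWeight, Finset.sum_filter]
  rw [Finset.sum_comm]
  simp

lemma weightLT_ceil_isBigO (hσ : ExpGrowth σ) (hσm : Measurable σ)
    (hne : ∀ k, iteratedDeriv k (gsmooth σ 1) 0 ≠ 0 ∨ iteratedDeriv (k + 1) (gsmooth σ 1) 0 ≠ 0)
    (hINAL : (fun n : ℕ => INAL n (f n) σ) =O[atTop] fun n : ℕ => (n : ℝ) ^ (-c)) (u : ℝ) :
    (fun n : ℕ => weightLT n ⌈u⌉₊ (f n)) =O[atTop] fun n : ℕ => (n : ℝ) ^ (u + 1 - c) := by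
  simp_rw [weightLT_eq_sum_levelWeight]
  refine IsBigO.fun_sum fun k hk => (levelWeight_isBigO hσ hσm (hne k) hINAL).trans ?_
  refine isBigO_natCast_rpow_of_le ?_
  linarith [Nat.lt_ceil.mp (Finset.mem_range.mp hk)]

lemma le_Ndim (hε : 0 ≤ ε) (n : ℕ) : n ≤ Ndim ε n := by
  rcases n.eq_zero_or_pos with rfl | hn
  · exact Nat.zero_le _
  · have le_rpow : (n : ℝ) ≤ (n : ℝ) ^ (1 + ε) :=
      Real.self_le_rpow_of_one_le (by exact_mod_cast hn) (by linarith)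
    exact_mod_cast le_rpow.trans (Nat.le_ceil _)

lemma div_Ndim_le_rpow (ε : ℝ) (n : ℕ) : (n : ℝ) / Ndim ε n ≤ (n : ℝ) ^ (-ε) := by
  rcases n.eq_zero_or_pos with rfl | hn
  · simpa using Real.zero_rpow_nonneg (-ε)
  · have hn : (0 : ℝ) < n := by exact_mod_cast hn
    calc (n : ℝ) / Ndim ε n ≤ n / (n : ℝ) ^ (1 + ε) := by
          gcongr
          exact Nat.le_ceil _
      _ = (n : ℝ) ^ (-ε) := by
          rw [Real.rpow_add hn, Real.rpow_one, Real.rpow_neg hn.le]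
          field_simp

lemma div_Ndim_pow_ceil_isBigO (hε : 0 ≤ ε) (u : ℝ) :
    (fun n : ℕ => ((n : ℝ) / Ndim ε n) ^ ⌈u⌉₊) =O[atTop] fun n : ℕ => (n : ℝ) ^ (-ε * u) := by
  have ratio_le : (fun n : ℕ => ((n : ℝ) / Ndim ε n) ^ ⌈u⌉₊) =O[atTop]
      fun n : ℕ => (n : ℝ) ^ (-ε * ⌈u⌉₊) := by
    refine .of_norm_le fun n => ?_
    rw [Real.norm_of_nonneg (by positivity), Real.rpow_mul_natCast n.cast_nonneg]
    gcongr
    exact div_Ndim_le_rpow ε n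
  refine ratio_le.trans (isBigO_natCast_rpow_of_le ?_)
  exact mul_le_mul_of_nonpos_left (Nat.le_ceil u) (by linarith)

lemma orbitCP_nonneg (N : ℕ) (f : (Fin N → Bool) → ℝ) : 0 ≤ orbitCP N f :=
  div_nonneg (Finset.sum_nonneg fun _ _ => Finset.sum_nonneg fun _ _ => sq_nonneg _) (by positivity)

lemma bExp_sq_of_isBooleanFn {n : ℕ} {f : (Fin n → Bool) → ℝ} (hf : IsBooleanFn f) :
    (bExp n fun x => f x ^ 2) = 1 := by
  have sq_eq_one (x : Fin n → Bool) : f x ^ 2 = 1 := sq_eq_one_iff.mpr (hf x)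
  simp [bExp, sq_eq_one]

end Asymptotics

theorem inal_bigO_implies_orbitCP_bigO_general {σ : ℝ → ℝ} (hσ : ExpGrowth σ) (hσm : Measurable σ)
    (hne : ∀ k, iteratedDeriv k (gsmooth σ 1) 0 ≠ 0 ∨ iteratedDeriv (k + 1) (gsmooth σ 1) 0 ≠ 0)
    {f : ∀ n : ℕ, (Fin n → Bool) → ℝ}
    (hf : (fun n : ℕ => bExp n fun x => f n x ^ 2) =O[atTop] fun _ => (1 : ℝ))
    {ε : ℝ} (hε : 0 ≤ ε) {c : ℝ}
    (hINAL : (fun n : ℕ => INAL n (f n) σ) =O[atTop] fun n : ℕ => (n : ℝ) ^ (-c)) :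
    (fun n : ℕ => orbitCP (Ndim ε n) (extendFn n (Ndim ε n) (f n))) =O[atTop]
      fun n : ℕ => (n : ℝ) ^ (-(ε / (1 + ε)) * (c - 1)) := by
  have low := weightLT_ceil_isBigO hσ hσm hne hINAL ((c - 1) / (1 + ε))
  have high := div_Ndim_pow_ceil_isBigO hε ((c - 1) / (1 + ε))
  have low_exponent : (c - 1) / (1 + ε) + 1 - c = -(ε / (1 + ε)) * (c - 1) := by
    field_simp
    ring
  have high_exponent : -ε * ((c - 1) / (1 + ε)) = -(ε / (1 + ε)) * (c - 1) := by ring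
  rw [low_exponent] at low
  rw [high_exponent] at high
  have upper := hf.mul (low.add ((hf.mul high).congr_right fun n => one_mul _))
  simp_rw [one_mul] at upper
  refine IsBigO.trans (.of_norm_le fun n => ?_) upper
  rw [Real.norm_of_nonneg (orbitCP_nonneg _ _)]
  exact orbitCP_extendFn_le_weightLT (le_Ndim hε n) (f n) _

/-- If `σ` is expressive and `INAL(f_n, σ) = O(n^{-c})`, then for every
`ε > 0`, with `N = n^{1+ε}`, `CP(orb(f̄_n), U^N) = O(n^{-(ε/(1+ε))(c-1)})`. -/
theorem inal_bigO_implies_orbitCP_bigO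
    (σ : ℝ → ℝ) (hσ : Expressive σ)
    (f : ∀ n : ℕ, (Fin n → Bool) → ℝ) (hf : ∀ n, IsBooleanFn (f n))
    (ε : ℝ) (hε : 0 < ε) (c : ℝ)
    (hINAL : (fun n : ℕ => INAL n (f n) σ) =O[atTop] fun n : ℕ => (n : ℝ) ^ (-c)) :
    (fun n : ℕ => orbitCP (Ndim ε n) (extendFn n (Ndim ε n) (f n))) =O[atTop]
      fun n : ℕ => (n : ℝ) ^ (-(ε / (1 + ε)) * (c - 1)) := by
  obtain ⟨hσm, hσb, hne⟩ := hσ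
  exact inal_bigO_implies_orbitCP_bigO_general hσb.expGrowth hσm hne
    (by simpa only [bExp_sq_of_isBooleanFn (hf _)] using isBigO_refl _ _) hε.le hINAL
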